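/- Every finite graph G on at least two vertices whose complement is connected is either the disjoint union of two nonempty graphs, or an inflation G = H[G_v : v ∈ V(H)] of a prime graph H on at least four vertices by nonempty graphs G_v. -/

import Mathlib

/-! Among the quotients of `G` (graphs `H` on at least two vertices of which `G` is an inflation;
`G` itself is one), a minimal one is prime: a nontrivial module of `H` could be contracted to a
single vertex, giving a smaller quotient (`exists_contraction`). No graph on three vertices is
prime, since two of its three vertex pairs agree in being edges or non-edges, and the vertex
common to these two pairs does not distinguish the other two. So a prime quotient has two vertices
or at least four. If it has two, they are nonadjacent because the complement of `G` is connected,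
and their fibers exhibit `G` as a disjoint union. -/

open scoped Classical

/-! ### Linear clique-width -/

/-- A configuration reached while building a graph by a linear clique-width expression:
the set of vertices introduced so far, the adjacency relation created so far, and the
current labeling of the vertices by labels from `Fin k`. -/
structure LCWConfig (V : Type) (k : ℕ) where
  verts : Set V
  adj : V → V → Prop
  lab : V → Fin k

/-- A single operation of a linear clique-width expression with `k` labels:
introduce a new vertex with some label, join all vertices labeled `i` to all vertices
labeled `j` (for `i ≠ j`), or relabel every vertex labeled `i` to `j` (for `i ≠ j`). -/
inductive LCWStep {V : Type} {k : ℕ} : LCWConfig V k → LCWConfig V k → Prop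
  | intro (C : LCWConfig V k) (v : V) (hv : v ∉ C.verts) (c : Fin k) :
      LCWStep C ⟨insert v C.verts, C.adj, fun x => if x = v then c else C.lab x⟩
  | join (C : LCWConfig V k) (i j : Fin k) (hij : i ≠ j) :
      LCWStep C ⟨C.verts, fun x y => C.adj x y ∨
        (x ∈ C.verts ∧ y ∈ C.verts ∧
          ((C.lab x = i ∧ C.lab y = j) ∨ (C.lab x = j ∧ C.lab y = i))), C.lab⟩
  | relabel (C : LCWConfig V k) (i j : Fin k) (hij : i ≠ j) :
      LCWStep C ⟨C.verts, C.adj, fun x => if C.lab x = i then j else C.lab x⟩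

/-- `lcwLE G k` means that the graph `G` can be constructed by a linear clique-width
expression using (at most) `k` labels. -/
def lcwLE {V : Type} (G : SimpleGraph V) (k : ℕ) : Prop :=
  ∃ ℓ₀ ℓ : V → Fin k,
    Relation.ReflTransGen LCWStep
      (⟨∅, fun _ _ => False, ℓ₀⟩ : LCWConfig V k) ⟨Set.univ, G.Adj, ℓ⟩

/-- The linear clique-width of a graph `G`: the least number of labels needed to
construct `G` by a linear clique-width expression. -/
noncomputable def lcw {V : Type} (G : SimpleGraph V) : ℕ :=
  sInf {k | lcwLE G k}

/-! ### Modules, prime graphs, inflations -/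

/-- A module of a graph: every vertex outside `M` is adjacent to all of `M` or to none of it. -/
def IsModule {V : Type} (G : SimpleGraph V) (M : Set V) : Prop :=
  ∀ u ∈ M, ∀ v ∈ M, ∀ w ∉ M, (G.Adj w u ↔ G.Adj w v)

/-- A graph on at least two vertices is prime if all of its modules are trivial
(empty, singletons, or the whole vertex set). -/
def IsPrime {V : Type} (G : SimpleGraph V) : Prop :=
  2 ≤ Nat.card V ∧ ∀ M : Set V, IsModule G M → M.Subsingleton ∨ M = Set.univ

/-- `IsInflation G H φ` says that `G` is an inflation of `H`, where `φ` maps each vertex of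
`G` to the vertex of `H` whose module (namely the induced subgraph of `G` on the fiber
`φ ⁻¹ {v}`) contains it: fibers are nonempty, and for vertices in distinct fibers,
adjacency in `G` is equivalent to adjacency of the fibers' images in `H`. -/
def IsInflation {V ι : Type} (G : SimpleGraph V) (H : SimpleGraph ι) (φ : V → ι) : Prop :=
  Function.Surjective φ ∧
    ∀ x y : V, φ x ≠ φ y → (G.Adj x y ↔ H.Adj (φ x) (φ y))

/-! ### Join, quasi-threshold graphs, universal quasi-threshold graphs -/

/-- The join of two graphs: their disjoint union together with all edges between the parts. -/
def GJoin {α β : Type} (G : SimpleGraph α) (H : SimpleGraph β) : SimpleGraph (α ⊕ β) :=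
  (Gᶜ ⊕g Hᶜ)ᶜ

/-- Quasi-threshold graphs: those constructible (up to isomorphism) from `K₁` by repeatedly
taking joins with `K₁` and disjoint unions with other quasi-threshold graphs. -/
inductive IsQT : ∀ {V : Type}, SimpleGraph V → Prop
  | single : IsQT (⊥ : SimpleGraph (Fin 1))
  | joinK1 {V : Type} {G : SimpleGraph V} :
      IsQT G → IsQT (GJoin (⊥ : SimpleGraph (Fin 1)) G)
  | union {V W : Type} {G : SimpleGraph V} {H : SimpleGraph W} :
      IsQT G → IsQT H → IsQT (G ⊕g H)
  | iso {V W : Type} {G : SimpleGraph V} {H : SimpleGraph W} :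
      IsQT G → Nonempty (G ≃g H) → IsQT H

/-- Vertex set of the universal quasi-threshold graph `Q_{n+1}`. -/
def QVert : ℕ → Type
  | 0 => Fin 1
  | n + 1 => ((Fin 1) ⊕ QVert n) ⊕ QVert n

/-- The universal quasi-threshold graphs, indexed so that `QGraph (t - 1)` is `Q_t`:
`Q_1 = K_1` and `Q_{t} = (K_1 ∗ Q_{t-1}) ⊎ Q_{t-1}` for `t ≥ 2`. -/
def QGraph : (n : ℕ) → SimpleGraph (QVert n)
  | 0 => ⊥
  | n + 1 => (GJoin (⊥ : SimpleGraph (Fin 1)) (QGraph n)) ⊕g (QGraph n)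

/-! ### Hereditary classes of graphs -/

/-- A hereditary class of finite graphs, represented by the set of its members on the
vertex sets `Fin n`: it is closed under isomorphism and induced subgraphs, which together
amount to closure under induced-subgraph embeddings. -/
def Hereditary (C : ∀ n : ℕ, Set (SimpleGraph (Fin n))) : Prop :=
  ∀ {m n : ℕ} (H : SimpleGraph (Fin m)) (G : SimpleGraph (Fin n)),
    Nonempty (H ↪g G) → G ∈ C n → H ∈ C m

/-- Contracting a module with at least two vertices, other than the whole vertex set, yields a
strictly smaller quotient, still on at least two vertices. The contraction is realized as the
subgraph induced on the complement of `M` together with one representative of `M`. -/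
theorem exists_contraction {ι : Type} [Finite ι] (H : SimpleGraph ι) (M : Set ι)
    (hM : IsModule H M) (hns : ¬ M.Subsingleton) (hnu : M ≠ Set.univ) :
    ∃ (κ : Type) (K : SimpleGraph κ) (r : ι → κ), Finite κ ∧ 2 ≤ Nat.card κ ∧
      Nat.card κ < Nat.card ι ∧ IsInflation H K r := by
  obtain ⟨m, hm, m', hm', hne⟩ := Set.not_subsingleton_iff.mp hns
  obtain ⟨w, hw⟩ := (Set.ne_univ_iff_exists_notMem M).mp hnu
  refine ⟨{x : ι // x ∉ M ∨ x = m}, H.comap Subtype.val,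
    fun x => if h : x ∈ M then ⟨m, Or.inr rfl⟩ else ⟨x, Or.inl h⟩, inferInstance, ?_, ?_, ?_, ?_⟩
  · have : Nontrivial {x : ι // x ∉ M ∨ x = m} :=
      ⟨⟨m, Or.inr rfl⟩, ⟨w, Or.inl hw⟩, fun h => hw (by
        have := congrArg Subtype.val h
        simp only at this
        rwa [← this])⟩
    exact Finite.one_lt_card
  · refine Finite.card_subtype_lt (x := m') ?_
    rintro (h | h)
    · exact h hm'
    · exact hne h.symm
  · rintro ⟨x, hx⟩
    refine ⟨x, ?_⟩
    by_cases h : x ∈ M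
    · have : x = m := hx.resolve_left (not_not.mpr h)
      simp [this, hm]
    · simp [h]
  · intro x y hxy
    by_cases hx : x ∈ M <;> by_cases hy : y ∈ M
    · simp [hx, hy] at hxy
    · simp only [hx, hy, dite_true, dite_false, SimpleGraph.comap_adj]
      rw [H.adj_comm x, H.adj_comm m]
      exact hM x hx m hm y hy
    · simp only [hx, hy, dite_true, dite_false, SimpleGraph.comap_adj]
      exact hM y hy m hm x hx
    · simp [hx, hy]

theorem IsInflation.comp {V ι κ : Type} {G : SimpleGraph V} {H : SimpleGraph ι}
    {K : SimpleGraph κ} {φ : V → ι} {r : ι → κ} (h₁ : IsInflation G H φ)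
    (h₂ : IsInflation H K r) : IsInflation G K (r ∘ φ) := by
  refine ⟨h₂.1.comp h₁.1, fun x y hxy => ?_⟩
  rw [h₁.2 x y (fun h => hxy (congrArg r h))]
  exact h₂.2 _ _ hxy

/-- Every quotient of `G` on at least two vertices can be contracted to a prime one. -/
theorem exists_prime_quotient {V : Type} (G : SimpleGraph V) (n : ℕ) :
    ∀ (ι : Type) (H : SimpleGraph ι) (φ : V → ι), Finite ι → Nat.card ι = n →
      2 ≤ Nat.card ι → IsInflation G H φ →
      ∃ (κ : Type) (K : SimpleGraph κ) (ψ : V → κ), IsPrime K ∧ IsInflation G K ψ := by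
  induction n using Nat.strong_induction_on with
  | _ n ih =>
    intro ι H φ hfin hcard h2 hφ
    by_cases hp : IsPrime H
    · exact ⟨ι, H, φ, hp, hφ⟩
    · have : ∃ M : Set ι, IsModule H M ∧ ¬ M.Subsingleton ∧ M ≠ Set.univ := by
        by_contra! hcon
        exact hp ⟨h2, fun M hM => or_iff_not_imp_left.mpr fun h =>
          hcon M hM (Set.not_subsingleton_iff.mp h)⟩
      obtain ⟨M, hM, hns, hnu⟩ := this
      obtain ⟨κ, K, r, hκ, hκ2, hlt, hr⟩ := exists_contraction H M hM hns hnu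
      exact ih _ (hcard ▸ hlt) κ K (r ∘ φ) hκ rfl hκ2 (hφ.comp hr)

theorem IsPrime.card_ne_three {ι : Type} {H : SimpleGraph ι} (hp : IsPrime H) :
    Nat.card ι ≠ 3 := by
  intro h3
  rw [← Set.ncard_univ, Set.ncard_eq_three] at h3
  obtain ⟨a, b, c, hab, hac, hbc, hU⟩ := h3
  have hall : ∀ w, w = a ∨ w = b ∨ w = c := fun w => by
    have : w ∈ (Set.univ : Set ι) := trivial
    rw [hU] at this
    simpa using this
  -- a vertex `z` not distinguishing the other two vertices `x`, `y` makes `{x, y}` a module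
  have key : ∀ x y z : ι, x ≠ y → z ≠ x → z ≠ y → (∀ w, w = x ∨ w = y ∨ w = z) →
      ¬ (H.Adj z x ↔ H.Adj z y) := by
    intro x y z hxy hzx hzy hw hiff
    rcases hp.2 {x, y} (by
      intro u hu v hv w hw'
      simp only [Set.mem_insert_iff, Set.mem_singleton_iff, not_or] at hu hv hw'
      obtain rfl : w = z := ((hw w).resolve_left hw'.1).resolve_left hw'.2
      rcases hu with rfl | rfl <;> rcases hv with rfl | rfl <;> tauto) with h | h
    · exact hxy (h (by simp) (by simp))
    · have : z ∈ ({x, y} : Set ι) := h ▸ Set.mem_univ z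
      simp [hzx, hzy] at this
  have h1 := key a b c hab hac.symm hbc.symm hall
  have h2 := key a c b hac hab.symm hbc (fun w => by have := hall w; tauto)
  have h3 := key b c a hbc hab hac (fun w => by have := hall w; tauto)
  rw [H.adj_comm c a, H.adj_comm c b] at h1
  rw [H.adj_comm b a] at h2
  tauto

/-- Every finite graph on at least two vertices whose complement is
connected is either the disjoint union of two nonempty graphs, or an inflation of a prime
graph on at least four vertices by nonempty graphs. -/
theorem coconnected_union_or_prime_inflation {V : Type} [Finite V] (G : SimpleGraph V)
    (hV : 2 ≤ Nat.card V) (hc : Gᶜ.Connected) :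
    (∃ A B : Set V, A.Nonempty ∧ B.Nonempty ∧ Disjoint A B ∧ A ∪ B = Set.univ ∧
      ∀ a ∈ A, ∀ b ∈ B, ¬ G.Adj a b) ∨
    (∃ (ι : Type) (H : SimpleGraph ι) (φ : V → ι),
      IsPrime H ∧ 4 ≤ Nat.card ι ∧ IsInflation G H φ) := by
  have hfin : Finite V := inferInstance
  obtain ⟨ι, H, φ, hp, hφ⟩ := exists_prime_quotient G _ V G id hfin rfl hV
    ⟨Function.surjective_id, fun _ _ _ => Iff.rfl⟩
  by_cases h4 : 4 ≤ Nat.card ι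
  · exact Or.inr ⟨ι, H, φ, hp, h4, hφ⟩
  have h2 : Nat.card ι = 2 := by
    have := hp.1
    have := hp.card_ne_three
    omega
  obtain ⟨a, b, hab, hU⟩ := Nat.card_eq_two_iff.mp h2
  have hall : ∀ w, w = a ∨ w = b := fun w => by
    have : w ∈ ({a, b} : Set ι) := hU ▸ Set.mem_univ w
    simpa using this
  obtain ⟨x, hx⟩ := hφ.1 a
  obtain ⟨y, hy⟩ := hφ.1 b
  -- otherwise the complement of `G` has no edge leaving the fiber of `a`
  have hnadj : ¬ H.Adj a b := by
    intro hadj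
    have hxy := (SimpleGraph.reachable_iff_reflTransGen x y).mp (hc.preconnected x y)
    have hstay : φ y = a := by
      clear hy
      induction hxy with
      | refl => exact hx
      | @tail u v _ huv ih =>
        refine (hall (φ v)).resolve_right fun hv => ?_
        have hne : φ u ≠ φ v := by rw [ih, hv]; exact hab
        refine (SimpleGraph.compl_adj _ _ _ |>.mp huv).2 ((hφ.2 u v hne).mpr ?_)
        rwa [ih, hv]
    exact hab (hstay.symm.trans hy)
  refine Or.inl ⟨φ ⁻¹' {a}, φ ⁻¹' {b}, ⟨x, hx⟩, ⟨y, hy⟩, ?_, ?_, ?_⟩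
  · exact Disjoint.preimage φ (by simpa using hab)
  · ext w
    simpa using hall (φ w)
  · intro u hu v hv h
    simp only [Set.mem_preimage, Set.mem_singleton_iff] at hu hv
    have := (hφ.2 u v (by rw [hu, hv]; exact hab)).mp h
    rw [hu, hv] at this
    exact hnadj this
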